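/- Let n ≥ 1, t ≥ 1 and q be integers with t < 2^{n−1} and q > 2t. Let S, S′ be multisets of elements of 𝔽₂ⁿ, each of cardinality t, with S ≠ S′, and for z ∈ 𝔽₂ⁿ set S_z := ∑_{x ∈ S} χ(z, x) ∈ ℤ (counted with multiplicity), and similarly S′_z. Then ∑_{θ : 𝔽₂ⁿ → Fin q} e_q( ∑_{z ∈ 𝔽₂ⁿ} θ_z · (S_z − S′_z) ) = 0 in ℂ. -/

import Mathlib

/-- The integer-valued character `χ(a, x) = (-1)^{⟨a,x⟩}` on `𝔽₂ⁿ`. -/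
def chi {ι : Type*} [Fintype ι] (a x : ι → ZMod 2) : ℤ :=
  if ∑ i, a i * x i = 0 then 1 else -1

/-- `e_q(s) = exp(2πi·s/q)`. -/
noncomputable def expq (q : ℕ) (s : ℤ) : ℂ :=
  Complex.exp (2 * Real.pi * Complex.I * s / q)

/-!
The phase is linear in `θ`, so the sum over `θ` factors as
`∏_z ∑_{k < q} e_q(k (S_z - S'_z))`, and a geometric sum over the `q`-th roots of unity vanishes
unless `q ∣ S_z - S'_z`. The numbers `S_z` are the Fourier coefficients of the multiplicity function
of `S`, hence determine `S`, and so `S_z ≠ S'_z` for some `z`. For that `z` the integer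
`S_z - S'_z` is nonzero of absolute value at most `|S| + |S'| < q`, so `q` does not divide it.
-/

section RootsOfUnity

lemma expq_sum {κ : Type*} (q : ℕ) (s : Finset κ) (f : κ → ℤ) :
    expq q (∑ z ∈ s, f z) = ∏ z ∈ s, expq q (f z) := by
  simp only [expq, ← Complex.exp_sum, Int.cast_sum, Finset.mul_sum, Finset.sum_div]

lemma expq_eq_zpow (q : ℕ) (s : ℤ) :
    expq q s = Complex.exp (2 * Real.pi * Complex.I / q) ^ s := by
  rw [expq, ← Complex.exp_int_mul]
  ring_nf

lemma expq_natCast_mul (q k : ℕ) (d : ℤ) : expq q (k * d) = expq q d ^ k := by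
  rw [expq_eq_zpow, expq_eq_zpow, mul_comm (k : ℤ), zpow_mul, zpow_natCast]

lemma expq_eq_one_iff {q : ℕ} (hq : q ≠ 0) (s : ℤ) : expq q s = 1 ↔ (q : ℤ) ∣ s := by
  rw [expq_eq_zpow, (Complex.isPrimitiveRoot_exp q hq).zpow_eq_one_iff_dvd]

lemma sum_fin_expq_mul_eq_zero {q : ℕ} (hq : q ≠ 0) {d : ℤ} (hd : ¬(q : ℤ) ∣ d) :
    ∑ k : Fin q, expq q ((k : ℕ) * d) = 0 := by
  have hne_one : expq q d ≠ 1 := mt (expq_eq_one_iff hq d).1 hd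
  have hpow : expq q d ^ q = 1 := by
    rw [← expq_natCast_mul, expq_eq_one_iff hq]
    exact dvd_mul_right _ _
  simp only [expq_natCast_mul]
  rw [Fin.sum_univ_eq_sum_range (expq q d ^ ·), geom_sum_eq hne_one, hpow, sub_self, zero_div]

lemma sum_pi_fin_expq {κ : Type*} [Fintype κ] [DecidableEq κ] (q : ℕ) (d : κ → ℤ) :
    ∑ θ : κ → Fin q, expq q (∑ z, (θ z : ℕ) * d z) =
      ∏ z, ∑ k : Fin q, expq q ((k : ℕ) * d z) := by
  simp only [Fintype.prod_sum, expq_sum]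

lemma sum_pi_fin_expq_eq_zero {κ : Type*} [Fintype κ] [DecidableEq κ] {q : ℕ}
    (hq : q ≠ 0) {d : κ → ℤ} {z : κ} (hz : ¬(q : ℤ) ∣ d z) :
    ∑ θ : κ → Fin q, expq q (∑ z, (θ z : ℕ) * d z) = 0 := by
  rw [sum_pi_fin_expq]
  exact Finset.prod_eq_zero (Finset.mem_univ z) (sum_fin_expq_mul_eq_zero hq hz)

end RootsOfUnity

section Characters

lemma pi_add_eq_zero_iff_of_charTwo {ι R : Type*} [Ring R] [CharP R 2] {x y : ι → R} :
    x + y = 0 ↔ x = y := by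
  simp only [funext_iff, Pi.add_apply, Pi.zero_apply, CharTwo.add_eq_zero]

variable {ι : Type*} [Fintype ι]

lemma chi_comm (a x : ι → ZMod 2) : chi a x = chi x a := by
  simp only [chi, mul_comm]

lemma chi_zero_left (x : ι → ZMod 2) : chi 0 x = 1 := by
  simp [chi]

lemma chi_add_left (a b x : ι → ZMod 2) : chi (a + b) x = chi a x * chi b x := by
  have sign_add : ∀ u v : ZMod 2, (if u + v = 0 then (1 : ℤ) else -1) =
      (if u = 0 then 1 else -1) * (if v = 0 then 1 else -1) := by decide
  simp only [chi, Pi.add_apply, add_mul, Finset.sum_add_distrib, sign_add]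

lemma chi_add_right (a x y : ι → ZMod 2) : chi a (x + y) = chi a x * chi a y := by
  simp only [chi_comm a, chi_add_left]

lemma abs_chi (a x : ι → ZMod 2) : |chi a x| = 1 := by
  unfold chi
  split_ifs <;> simp

/-- The character `χ(·, x)` as a bundled additive character of `𝔽₂^ι`, giving access to the
library's orthogonality relation. -/
def chiAddChar (x : ι → ZMod 2) : AddChar (ι → ZMod 2) ℤ where
  toFun a := chi a x
  map_zero_eq_one' := chi_zero_left x
  map_add_eq_mul' a b := chi_add_left a b x

lemma chi_single_one [DecidableEq ι] (i : ι) (x : ι → ZMod 2) :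
    chi (Pi.single i 1) x = if x i = 0 then 1 else -1 := by
  simp [chi, Pi.single_apply]

lemma chiAddChar_ne_one {x : ι → ZMod 2} (hx : x ≠ 0) : chiAddChar x ≠ 1 := by
  classical
  obtain ⟨i, hi⟩ : ∃ i, x i ≠ 0 := Function.ne_iff.1 hx
  refine AddChar.ne_one_iff.2 ⟨Pi.single i 1, ?_⟩
  change chi (Pi.single i 1) x ≠ 1
  rw [chi_single_one, if_neg hi]
  decide

lemma sum_chi [DecidableEq ι] (x : ι → ZMod 2) :
    ∑ z, chi z x = if x = 0 then (Fintype.card (ι → ZMod 2) : ℤ) else 0 := by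
  split_ifs with hx
  · simp [hx, chi_comm _ 0, chi_zero_left]
  · exact AddChar.sum_eq_zero_of_ne_one (chiAddChar_ne_one hx)

lemma sum_chi_mul_chi [DecidableEq ι] (x y : ι → ZMod 2) :
    ∑ z, chi z x * chi z y = if x = y then (Fintype.card (ι → ZMod 2) : ℤ) else 0 := by
  simp only [← chi_add_right, sum_chi, pi_add_eq_zero_iff_of_charTwo]

end Characters

section CharSum

variable {ι : Type*} [Fintype ι]

/-- The character sum `S_z = ∑_{x ∈ S} χ(z, x)` of a multiset `S`, counted with multiplicity: the
Fourier transform of the multiplicity function of `S`. -/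
def charSum (S : Multiset (ι → ZMod 2)) (z : ι → ZMod 2) : ℤ :=
  (S.map fun x => chi z x).sum

lemma charSum_zero (z : ι → ZMod 2) : charSum 0 z = 0 := by
  simp [charSum]

lemma charSum_cons (x : ι → ZMod 2) (S : Multiset (ι → ZMod 2)) (z : ι → ZMod 2) :
    charSum (x ::ₘ S) z = chi z x + charSum S z := by
  simp [charSum]

lemma abs_charSum_le_card (S : Multiset (ι → ZMod 2)) (z : ι → ZMod 2) :
    |charSum S z| ≤ S.card := by
  simpa [charSum, abs_chi] using Multiset.abs_sum_le_sum_abs (s := S.map fun x => chi z x)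

lemma sum_chi_mul_charSum [DecidableEq ι] (S : Multiset (ι → ZMod 2)) (y : ι → ZMod 2) :
    ∑ z, chi z y * charSum S z = Fintype.card (ι → ZMod 2) * S.count y := by
  induction S using Multiset.induction with
  | empty => simp [charSum_zero]
  | cons x S ih =>
    simp only [charSum_cons, mul_add, Finset.sum_add_distrib, ih, sum_chi_mul_chi,
      Multiset.count_cons]
    split_ifs <;> push_cast <;> ring

lemma charSum_injective :
    Function.Injective (charSum : Multiset (ι → ZMod 2) → (ι → ZMod 2) → ℤ) := by
  classical
  intro S S' h
  ext y
  have hcount : (Fintype.card (ι → ZMod 2) : ℤ) * S.count y =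
      Fintype.card (ι → ZMod 2) * S'.count y := by
    rw [← sum_chi_mul_charSum, ← sum_chi_mul_charSum, h]
  exact_mod_cast mul_left_cancel₀ (Nat.cast_ne_zero.2 Fintype.card_ne_zero) hcount

end CharSum

theorem stmt4_general {ι : Type*} [Fintype ι] [DecidableEq ι] {q : ℕ}
    {S S' : Multiset (ι → ZMod 2)} (hne : S ≠ S') (hq : S.card + S'.card < q) :
    ∑ θ : (ι → ZMod 2) → Fin q,
      expq q (∑ z, (θ z : ℕ) * (charSum S z - charSum S' z)) = 0 := by
  obtain ⟨z, hz⟩ : ∃ z, charSum S z ≠ charSum S' z :=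
    Function.ne_iff.1 (charSum_injective.ne hne)
  have habs : |charSum S z - charSum S' z| < q :=
    calc |charSum S z - charSum S' z| ≤ |charSum S z| + |charSum S' z| := abs_sub _ _
      _ ≤ S.card + S'.card := add_le_add (abs_charSum_le_card S z) (abs_charSum_le_card S' z)
      _ < q := mod_cast hq
  have hdvd : ¬(q : ℤ) ∣ charSum S z - charSum S' z := fun h =>
    sub_ne_zero.2 hz (Int.eq_zero_of_abs_lt_dvd h habs)
  exact sum_pi_fin_expq_eq_zero (Nat.ne_zero_of_lt hq) hdvd

/-- Orthogonality of the FHFHF set states for distinct multisets `S ≠ S'` of size `t < 2^{n-1}`: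
the phase sum `∑_θ e_q(∑_z θ_z (S_z - S'_z))` vanishes (where `S_z = ∑_{x∈S} χ(z,x)`). -/
theorem stmt4 (n t q : ℕ) (hn : 1 ≤ n) (ht : 1 ≤ t) (htn : t < 2 ^ (n - 1)) (hq : 2 * t < q)
    (S S' : Multiset (Fin n → ZMod 2))
    (hS : Multiset.card S = t) (hS' : Multiset.card S' = t) (hne : S ≠ S') :
    ∑ θ : (Fin n → ZMod 2) → Fin q,
      expq q (∑ z : Fin n → ZMod 2,
        ((θ z : ℕ) : ℤ) *
          ((S.map fun x => chi z x).sum - (S'.map fun x => chi z x).sum)) = 0 :=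
  stmt4_general hne (by omega)
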